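/- arXiv:1505.00433 — 3 statements merged into one kernel-verified Lean document; each statement's English description precedes it below -/
import Mathlib

section
/- The two-sided Thue–Morse sequence is overlap-free: for every nonempty word β over {0,1} and every integer n with 1 ≤ n ≤ |β|, the word β β β_{[1,n]} (two copies of β followed by the first n letters of β) is not a factor of ω. -/
/-- One-sided Thue–Morse sequence: parity of the binary digit sum. -/
def tm (n : ℕ) : ℕ := (Nat.digits 2 n).sum % 2

/-- Two-sided Thue–Morse sequence `ω : ℤ → {0,1}`. -/
def tmZ (n : ℤ) : ℕ := if 0 ≤ n then tm n.toNat else tm (-n - 1).toNat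

/-- The block `ω_[m, m+k-1]` of the two-sided Thue–Morse sequence. -/
def tmBlock (m : ℤ) (k : ℕ) : List ℕ := (List.range k).map fun j => tmZ (m + j)

/-- A (nonempty) word is a factor of the two-sided Thue–Morse sequence. -/
def IsFactor (α : List ℕ) : Prop := α ≠ [] ∧ ∃ m : ℤ, α = tmBlock m α.length

/-- The words `i⁽ⁿ⁾`: `blk i 0 = [i]`, `blk i (n+1) = blk i n ++ blk (1-i) n`. -/
def blk : ℕ → ℕ → List ℕ
  | i, 0 => [i]
  | i, n + 1 => blk i n ++ blk (1 - i) n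

/-!
The Thue–Morse substitution sends a letter `a` to the two-letter word `a (σ a)`, where `σ` exchanges
the two letters. Let `f` be the image of `g` under it. An overlap of even period `2q` in `f`,
read at every second position, gives an overlap of period `q` in `g`. In an overlap of odd period,
`f (i + 1) = σ (f i)` holds for even `i` by construction, and for odd `i` by moving to the even
position `i + p`; so `f (m + p) = σ^[p] (f m) = σ (f m)`, contradicting `f (m + p) = f m`. Hence a
sequence that can be desubstituted indefinitely has no overlap.

The sequence `ω` can be: exchanging its letters at negative positions gives a sequence whose image
is `ω`, and which is in turn the image of `ω`.
-/

section Substitution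

variable {α : Type*} {σ : α → α} {f g : ℤ → α} {m : ℤ} {p q : ℕ}

/-- `f` is the image of `g` under the substitution `a ↦ a (σ a)`, the image of the letter `g n`
occupying the positions `2 * n` and `2 * n + 1`. The Thue–Morse substitution is the case where `σ`
exchanges two letters. -/
structure IsMorseImage (σ : α → α) (f g : ℤ → α) : Prop where
  apply_two_mul (n : ℤ) : f (2 * n) = g n
  apply_two_mul_add_one (n : ℤ) : f (2 * n + 1) = σ (g n)

/-- The sequence `f` has an overlap of period `p` at `m`: its block of length `2 * p + 1` that
starts at position `m` has period `p`. -/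
def IsOverlapAt (f : ℤ → α) (m : ℤ) (p : ℕ) : Prop :=
  ∀ i ∈ Set.Icc m (m + p), f (i + p) = f i

namespace IsMorseImage

theorem isOverlapAt_half (h : IsMorseImage σ f g) (hσ : σ.Injective)
    (hf : IsOverlapAt f m (2 * q)) : IsOverlapAt g (m / 2) q := by
  rintro i ⟨hmi, him⟩
  obtain hm | hm := Int.emod_two_eq_zero_or_one m
  · have hi : f (2 * (i + q)) = f (2 * i) := by
      convert hf (2 * i) ⟨by omega, by push_cast; omega⟩ using 2
      push_cast
      ring
    rwa [h.apply_two_mul, h.apply_two_mul] at hi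
  · have hi : f (2 * (i + q) + 1) = f (2 * i + 1) := by
      convert hf (2 * i + 1) ⟨by omega, by push_cast; omega⟩ using 2
      push_cast
      ring
    rw [h.apply_two_mul_add_one, h.apply_two_mul_add_one] at hi
    exact hσ hi

theorem apply_add_one_of_even (h : IsMorseImage σ f g) {i : ℤ} (hi : Even i) :
    f (i + 1) = σ (f i) := by
  obtain ⟨n, rfl⟩ := hi.two_dvd
  rw [h.apply_two_mul_add_one, h.apply_two_mul]

theorem apply_add_one_of_isOverlapAt (h : IsMorseImage σ f g) (hp : Odd p)
    (hf : IsOverlapAt f m p) {i : ℤ} (hi : i ∈ Set.Ico m (m + p)) : f (i + 1) = σ (f i) := by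
  obtain ⟨hmi, him⟩ := hi
  obtain hi | hi := Int.even_or_odd i
  · exact h.apply_add_one_of_even hi
  · calc f (i + 1) = f (i + 1 + p) := (hf _ ⟨by omega, by omega⟩).symm
      _ = f (i + p + 1) := by rw [add_right_comm]
      _ = σ (f (i + p)) := h.apply_add_one_of_even (hi.add_odd (mod_cast hp))
      _ = σ (f i) := by rw [hf i ⟨hmi, him.le⟩]

theorem not_isOverlapAt_of_odd (h : IsMorseImage σ f g) (hσ : σ.Involutive)
    (hσ' : ∀ a, σ a ≠ a) (hp : Odd p) : ¬ IsOverlapAt f m p := by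
  intro hf
  have iterate_eq : ∀ k ≤ p, f (m + k) = σ^[k] (f m) := by
    intro k
    induction k with
    | zero => simp
    | succ k ih =>
      intro hk
      rw [Function.iterate_succ_apply', ← ih (by omega), Nat.cast_succ, ← add_assoc]
      exact h.apply_add_one_of_isOverlapAt hp hf ⟨by omega, by omega⟩
  apply hσ' (f m)
  calc σ (f m) = σ^[p] (f m) := by rw [hσ.iterate_odd hp]
    _ = f (m + p) := (iterate_eq p le_rfl).symm
    _ = f m := hf m ⟨le_rfl, by omega⟩

end IsMorseImage

theorem not_isOverlapAt_of_forall_exists_isMorseImage {ι : Type*} {F : ι → ℤ → α}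
    (hσ : σ.Involutive) (hσ' : ∀ a, σ a ≠ a) (hF : ∀ i, ∃ j, IsMorseImage σ (F i) (F j))
    (hp : p ≠ 0) (i : ι) (m : ℤ) : ¬ IsOverlapAt (F i) m p := by
  induction p using Nat.strong_induction_on generalizing i m with
  | h p ih =>
    intro hf
    obtain ⟨j, hij⟩ := hF i
    obtain ⟨q, rfl⟩ | hodd := Nat.even_or_odd p
    · rw [← two_mul] at hf
      exact ih q (by omega) (by omega) j (m / 2) (hij.isOverlapAt_half hσ.injective hf)
    · exact hij.not_isOverlapAt_of_odd hσ hσ' hodd hf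

end Substitution

section ThueMorse

theorem tm_two_mul (n : ℕ) : tm (2 * n) = tm n := by
  obtain rfl | hn := n.eq_zero_or_pos
  · rfl
  · simp [tm, Nat.digits_base_mul one_lt_two hn]

theorem natCast_tm_two_mul_add_one (n : ℕ) : (tm (2 * n + 1) : ZMod 2) = tm n + 1 := by
  have digits_eq : Nat.digits 2 (2 * n + 1) = 1 :: Nat.digits 2 n := by
    rw [add_comm, Nat.digits_add 2 one_lt_two 1 n one_lt_two (.inl one_ne_zero)]
  simp only [tm, digits_eq, List.sum_cons, ZMod.natCast_mod, Nat.cast_add, Nat.cast_one]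
  exact add_comm _ _

theorem tmZ_natCast (n : ℕ) : tmZ n = tm n := by
  simp [tmZ]

theorem tmZ_negSucc (n : ℕ) : tmZ (Int.negSucc n) = tm n := by
  have toNat_eq : (-Int.negSucc n - 1).toNat = n := by omega
  rw [tmZ, if_neg (Int.negSucc_lt_zero n).not_ge, toNat_eq]

/-- The two-sided Thue–Morse sequence with `a` added to its letters at negative positions. The
letters are taken in `ZMod 2`, where exchanging them is adding `1`. -/
def tmShiftNeg (a : ZMod 2) (n : ℤ) : ZMod 2 := tmZ n + if n < 0 then a else 0

theorem tmShiftNeg_zero (n : ℤ) : tmShiftNeg 0 n = tmZ n := by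
  simp [tmShiftNeg]

theorem tmShiftNeg_natCast (a : ZMod 2) (n : ℕ) : tmShiftNeg a n = tm n := by
  simp [tmShiftNeg, tmZ_natCast]

theorem tmShiftNeg_negSucc (a : ZMod 2) (n : ℕ) : tmShiftNeg a (Int.negSucc n) = tm n + a := by
  simp [tmShiftNeg, tmZ_negSucc]

theorem isMorseImage_tmShiftNeg (a : ZMod 2) :
    IsMorseImage (· + 1) (tmShiftNeg a) (tmShiftNeg (a + 1)) where
  apply_two_mul
    | .ofNat n => by
      rw [show 2 * Int.ofNat n = (2 * n : ℕ) by simp, Int.ofNat_eq_natCast]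
      simp only [tmShiftNeg_natCast, tm_two_mul]
    | .negSucc n => by
      rw [show 2 * Int.negSucc n = Int.negSucc (2 * n + 1) by omega]
      simp only [tmShiftNeg_negSucc, natCast_tm_two_mul_add_one]
      ring
  apply_two_mul_add_one
    | .ofNat n => by
      rw [show 2 * Int.ofNat n + 1 = (2 * n + 1 : ℕ) by simp, Int.ofNat_eq_natCast]
      simp only [tmShiftNeg_natCast, natCast_tm_two_mul_add_one]
    | .negSucc n => by
      rw [show 2 * Int.negSucc n + 1 = Int.negSucc (2 * n) by omega]
      simp only [tmShiftNeg_negSucc, tm_two_mul, add_assoc, CharTwo.add_self_eq_zero, add_zero]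

theorem not_isOverlapAt_tmZ {p : ℕ} (hp : p ≠ 0) (m : ℤ) : ¬ IsOverlapAt tmZ m p := by
  intro h
  refine not_isOverlapAt_of_forall_exists_isMorseImage (σ := (· + (1 : ZMod 2)))
    (fun a ↦ ?_) (fun a ↦ ?_) (fun a ↦ ⟨a + 1, isMorseImage_tmShiftNeg a⟩) hp 0 m fun i hi ↦ ?_
  · simp only [add_assoc, CharTwo.add_self_eq_zero, add_zero]
  · exact add_ne_left.mpr one_ne_zero
  · rw [tmShiftNeg_zero, tmShiftNeg_zero, h i hi]

end ThueMorse

section Words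

theorem hasPeriod_append_append_take {α : Type*} (w : List α) (n : ℕ) :
    (w ++ w ++ w.take n).HasPeriod w.length := by
  rw [List.HasPeriod, List.append_assoc, List.take_left, List.prefix_append_right_inj,
    List.prefix_append_right_inj]
  exact (List.take_prefix n w).trans (List.prefix_append _ _)

theorem length_tmBlock (m : ℤ) (k : ℕ) : (tmBlock m k).length = k := by
  simp [tmBlock]

theorem getElem?_tmBlock (m : ℤ) {k i : ℕ} (hi : i < k) :
    (tmBlock m k)[i]? = some (tmZ (m + i)) := by
  simp [tmBlock, hi, ← List.map_eq_flatMap]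

theorem isOverlapAt_tmZ_of_hasPeriod_tmBlock {m : ℤ} {p k : ℕ} (hk : 2 * p < k)
    (h : (tmBlock m k).HasPeriod p) : IsOverlapAt tmZ m p := by
  rintro i ⟨hmi, him⟩
  lift i - m to ℕ using by omega with j hj
  obtain rfl : i = m + j := by omega
  have hlen := length_tmBlock m k
  have hper := List.hasPeriod_iff_getElem?.mp h j (by omega)
  rw [getElem?_tmBlock m (by omega), getElem?_tmBlock m (by omega), Option.some.injEq] at hper
  rw [hper, Nat.cast_add, add_assoc]

end Words

/-- The two-sided Thue–Morse sequence is overlap-free: no word of the form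
`β β β_[1,n]` with `β` a nonempty word over `{0,1}` and `1 ≤ n ≤ |β|` is a factor. -/
theorem thueMorse_overlapFree (β : List ℕ) (hβ : β ≠ []) (hβ01 : ∀ x ∈ β, x = 0 ∨ x = 1)
    (n : ℕ) (hn1 : 1 ≤ n) (hn2 : n ≤ β.length) :
    ¬ IsFactor (β ++ β ++ β.take n) := by
  rintro ⟨-, m, hm⟩
  have period := hasPeriod_append_append_take β n
  rw [hm] at period
  refine not_isOverlapAt_tmZ (List.length_pos_iff.mpr hβ).ne' m
    (isOverlapAt_tmZ_of_hasPeriod_tmBlock ?_ period)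
  simp only [List.length_append, List.length_take]
  omega
end

section
/- Let α be a factor of ω with |α| ≥ 2 and fix n ≥ 0. Suppose α = γ_0 i_1^{(n)} ⋯ i_k^{(n)} γ_1 and α = γ_0' j_1^{(n)} ⋯ j_l^{(n)} γ_1', where 2 ≤ k ≤ 4, 2 ≤ l ≤ 4, i_1,…,i_k, j_1,…,j_l ∈ {0,1}, γ_0 and γ_0' are suffixes of 0^{(n)} or of 1^{(n)} of length < 2^n, and γ_1 and γ_1' are prefixes of 0^{(n)} or of 1^{(n)} of length < 2^n. Then γ_0 = γ_0', k = l, i_m = j_m for all 1 ≤ m ≤ k, and γ_1 = γ_1'; that is, for fixed n the expression of α in i^{(n)}-blocks is unique. -/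
/-!
The words `i⁽ⁿ⁾` are the iterates of the letters under the substitution `0 ↦ 01`, `1 ↦ 10`, and the
image of a word of length two can occur in a Thue–Morse-like sequence only at an even position: at
an odd position it would force three equal consecutive letters one level of the substitution
further down. Undoing the substitution `n` times, two adjacent blocks `i⁽ⁿ⁾ j⁽ⁿ⁾` can occur only at
a multiple of `2ⁿ`. So the position of the first block of a decomposition is determined modulo `2ⁿ`,
hence `γ₀` is determined by its length being less than `2ⁿ`, and the rest is read off block by
block.
-/

section Code

variable {A B : Type*} {f : A → List B} {L : ℕ}

theorem length_flatten_map (hL : ∀ a, (f a).length = L) (u : List A) :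
    (u.map f).flatten.length = L * u.length := by
  simp [Function.comp_def, hL, mul_comm]

theorem flatten_map_append_inj (hf : Function.Injective f) (hL : ∀ a, (f a).length = L)
    {γ γ' : List B} (hγ : γ.length < L) (hγ' : γ'.length < L) {u v : List A}
    (h : (u.map f).flatten ++ γ = (v.map f).flatten ++ γ') : u = v ∧ γ = γ' := by
  have hlen : u.length = v.length := by
    have htotal : L * u.length + γ.length = L * v.length + γ'.length := by
      simpa only [List.length_append, length_flatten_map hL] using congrArg List.length h
    have hpos : 0 < L := by omega
    simpa only [Nat.mul_add_div hpos, Nat.div_eq_of_lt hγ, Nat.div_eq_of_lt hγ', add_zero]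
      using congrArg (· / L) htotal
  obtain ⟨hflatten, hγγ'⟩ :=
    List.append_inj h (by rw [length_flatten_map hL, length_flatten_map hL, hlen])
  have hmap : u.map f = v.map f :=
    List.eq_iff_flatten_eq.mpr ⟨hflatten, by simp [Function.comp_def, hL, hlen]⟩
  exact ⟨hf.list_map hmap, hγγ'⟩

end Code

section Block

/-- The Thue–Morse substitution `0 ↦ 01`, `1 ↦ 10`, extended to all words over `ℕ` by
`a ↦ a (1 - a)` with truncated subtraction, as in `blk`. -/
def morseSubst (w : List ℕ) : List ℕ := w.flatMap fun a => [a, 1 - a]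

theorem morseSubst_append (u v : List ℕ) :
    morseSubst (u ++ v) = morseSubst u ++ morseSubst v :=
  List.flatMap_append

theorem blk_succ_eq_morseSubst (i n : ℕ) : blk i (n + 1) = morseSubst (blk i n) := by
  induction n generalizing i with
  | zero => rfl
  | succ n ih =>
    calc
      blk i (n + 2) = morseSubst (blk i n) ++ morseSubst (blk (1 - i) n) := by rw [blk, ih, ih]
      _ = morseSubst (blk i (n + 1)) := by rw [← morseSubst_append, blk]

theorem length_blk (i n : ℕ) : (blk i n).length = 2 ^ n := by
  induction n generalizing i with
  | zero => rfl
  | succ n ih => rw [blk, List.length_append, ih, ih, pow_succ, mul_two]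

theorem head?_blk (i n : ℕ) : (blk i n).head? = some i := by
  induction n with
  | zero => rfl
  | succ n ih => rw [blk, List.head?_append, ih, Option.some_or]

theorem blk_left_injective (n : ℕ) : Function.Injective fun i => blk i n := fun i j h =>
  Option.some_injective _ <| by
    rw [← head?_blk i n, ← head?_blk j n]
    exact congrArg List.head? h

end Block

section Occurrence

/-- The word `w` occurs in the two-sided sequence `x` at position `p`. -/
def OccursAt (x : ℤ → ℕ) : ℤ → List ℕ → Prop
  | _, [] => True
  | p, a :: w => x p = a ∧ OccursAt x (p + 1) w

variable {x : ℤ → ℕ} {p : ℤ}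

theorem occursAt_append {u v : List ℕ} :
    OccursAt x p (u ++ v) ↔ OccursAt x p u ∧ OccursAt x (p + u.length) v := by
  induction u generalizing p with
  | nil => simp [OccursAt]
  | cons a u ih =>
    have hp : p + 1 + (u.length : ℤ) = p + ((a :: u).length : ℤ) := by
      rw [List.length_cons]
      push_cast
      ring
    rw [List.cons_append, OccursAt, OccursAt, ih, hp, and_assoc]

theorem OccursAt.of_morseSubst {w : List ℕ} (h : OccursAt x (2 * p) (morseSubst w)) :
    OccursAt (fun k => x (2 * k)) p w := by
  induction w generalizing p with
  | nil => trivial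
  | cons a w ih =>
    obtain ⟨ha, -, hw⟩ := h
    refine ⟨ha, ih ?_⟩
    rwa [show 2 * (p + 1) = 2 * p + 1 + 1 by ring]

end Occurrence

section Desubstitution

/-- The binary sequence `x` is, to every order `n`, a concatenation of images of letters under the
`n`-th power of `0 ↦ 01`, `1 ↦ 10`, cut at the multiples of `2ⁿ`: each `k ↦ x (2ⁿ k)` is made of
pairs `01` and `10` at the positions `2k`, `2k + 1`. Over `ℕ`, sum `1` says both that the letters
of a pair are `0` or `1` and that they differ. -/
def IsMorseDesubstitutable (x : ℤ → ℕ) : Prop :=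
  ∀ (n : ℕ) (k : ℤ), x (2 ^ n * (2 * k)) + x (2 ^ n * (2 * k + 1)) = 1

namespace IsMorseDesubstitutable

variable {x : ℤ → ℕ}

theorem add_eq_one (hx : IsMorseDesubstitutable x) (k : ℤ) : x (2 * k) + x (2 * k + 1) = 1 := by
  simpa using hx 0 k

theorem comp_two_mul (hx : IsMorseDesubstitutable x) :
    IsMorseDesubstitutable fun k => x (2 * k) := fun n k => by
  simpa only [pow_succ', mul_assoc] using hx (n + 1) k

theorem not_three_eq (hx : IsMorseDesubstitutable x) (k : ℤ) :
    ¬(x k = x (k + 1) ∧ x (k + 1) = x (k + 2)) := by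
  rintro ⟨h₀₁, h₁₂⟩
  obtain ⟨q, rfl | rfl⟩ := Int.even_or_odd' k
  · have hpair := hx.add_eq_one q
    omega
  · have hpair := hx.add_eq_one (q + 1)
    rw [show 2 * (q + 1) = 2 * q + 1 + 1 by ring,
      show 2 * q + 1 + 1 + 1 = 2 * q + 1 + 2 by ring] at hpair
    omega

theorem even_of_occursAt_morseSubst (hx : IsMorseDesubstitutable x) {p : ℤ} {w : List ℕ}
    (hw : 2 ≤ w.length) (h : OccursAt x p (morseSubst w)) : Even p := by
  by_contra hp
  obtain ⟨q, rfl⟩ := Int.not_even_iff_odd.mp hp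
  obtain ⟨c, d, v, rfl⟩ : ∃ c d v, w = c :: d :: v :=
    match w, hw with
    | c :: d :: v, _ => ⟨c, d, v, rfl⟩
  obtain ⟨h₁, h₂, h₃, h₄, -⟩ := h
  rw [show 2 * q + 1 + 1 = 2 * (q + 1) by ring] at h₂ h₃ h₄
  rw [show 2 * (q + 1) + 1 + 1 = 2 * (q + 2) by ring] at h₄
  have hpair₀ := hx.add_eq_one q
  have hpair₁ := hx.add_eq_one (q + 1)
  exact hx.comp_two_mul.not_three_eq q ⟨by omega, by omega⟩

theorem two_pow_dvd_of_occursAt_blk_append_blk (hx : IsMorseDesubstitutable x) {n : ℕ}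
    {p : ℤ} {a b : ℕ} (h : OccursAt x p (blk a n ++ blk b n)) : (2 ^ n : ℤ) ∣ p := by
  induction n generalizing x p with
  | zero => simp
  | succ n ih =>
    rw [blk_succ_eq_morseSubst, blk_succ_eq_morseSubst, ← morseSubst_append] at h
    have hlen : 2 ≤ (blk a n ++ blk b n).length := by
      have hpow := Nat.one_le_two_pow (n := n)
      rw [List.length_append, length_blk, length_blk]
      omega
    obtain ⟨q, rfl⟩ := (hx.even_of_occursAt_morseSubst hlen h).two_dvd
    rw [pow_succ']
    exact mul_dvd_mul_left 2 (ih hx.comp_two_mul h.of_morseSubst)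

theorem two_pow_dvd_add_length (hx : IsMorseDesubstitutable x) {n : ℕ} {m : ℤ}
    {is γ₀ γ₁ : List ℕ} (his : 2 ≤ is.length)
    (h : OccursAt x m (γ₀ ++ (is.map fun i => blk i n).flatten ++ γ₁)) :
    (2 ^ n : ℤ) ∣ m + γ₀.length := by
  match is, his with
  | a :: b :: is, _ =>
    simp only [List.map_cons, List.flatten_cons, List.append_assoc] at h
    have hblocks := (occursAt_append.mp h).2
    rw [← List.append_assoc] at hblocks
    exact hx.two_pow_dvd_of_occursAt_blk_append_blk (occursAt_append.mp hblocks).1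

end IsMorseDesubstitutable

end Desubstitution

section ThueMorse

theorem tm_add_tm_two_mul_add_one (n : ℕ) : tm n + tm (2 * n + 1) = 1 := by
  have hdigits : Nat.digits 2 (2 * n + 1) = 1 :: Nat.digits 2 n := by
    rw [Nat.digits_def' one_lt_two (by omega)]
    congr 2 <;> omega
  rw [tm, tm, hdigits, List.sum_cons]
  omega

theorem tmZ_two_mul_of_nonneg {k : ℤ} (hk : 0 ≤ k) : tmZ (2 * k) = tmZ k := by
  lift k to ℕ using hk
  rw [← Nat.cast_ofNat, ← Nat.cast_mul, tmZ_natCast, tmZ_natCast, tm_two_mul]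

theorem tmZ_add_tmZ_two_mul_of_neg {k : ℤ} (hk : k < 0) : tmZ k + tmZ (2 * k) = 1 := by
  obtain ⟨l, rfl⟩ := Int.eq_negSucc_of_lt_zero hk
  rw [show 2 * Int.negSucc l = Int.negSucc (2 * l + 1) by omega, tmZ_negSucc, tmZ_negSucc,
    tm_add_tm_two_mul_add_one]

theorem tmZ_two_mul_add_tmZ_two_mul_add_one (k : ℤ) : tmZ (2 * k) + tmZ (2 * k + 1) = 1 := by
  cases k with
  | ofNat l =>
    rw [show 2 * Int.ofNat l = ((2 * l : ℕ) : ℤ) by simp,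
      show ((2 * l : ℕ) : ℤ) + 1 = ((2 * l + 1 : ℕ) : ℤ) by simp, tmZ_natCast, tmZ_natCast,
      tm_two_mul, tm_add_tm_two_mul_add_one]
  | negSucc l =>
    rw [show 2 * Int.negSucc l = Int.negSucc (2 * l + 1) by omega,
      show Int.negSucc (2 * l + 1) + 1 = Int.negSucc (2 * l) by omega, tmZ_negSucc, tmZ_negSucc,
      tm_two_mul, add_comm, tm_add_tm_two_mul_add_one]

-- Doubling fixes `ω` on the right half and complements it on the left half; the two positions of a
-- pair lie in the same half, so the pair stays complementary.
theorem isMorseDesubstitutable_tmZ : IsMorseDesubstitutable tmZ := by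
  intro n k
  induction n with
  | zero => simpa using tmZ_two_mul_add_tmZ_two_mul_add_one k
  | succ n ih =>
    rw [pow_succ', mul_assoc, mul_assoc]
    rcases le_or_gt 0 k with hk | hk
    · rw [tmZ_two_mul_of_nonneg (by positivity), tmZ_two_mul_of_nonneg (by positivity), ih]
    · have hpow : (0 : ℤ) < 2 ^ n := by positivity
      have heven := tmZ_add_tmZ_two_mul_of_neg (mul_neg_of_pos_of_neg hpow (b := 2 * k) (by omega))
      have hodd :=
        tmZ_add_tmZ_two_mul_of_neg (mul_neg_of_pos_of_neg hpow (b := 2 * k + 1) (by omega))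
      omega

theorem tmBlock_succ (m : ℤ) (k : ℕ) : tmBlock m (k + 1) = tmZ m :: tmBlock (m + 1) k := by
  simp [tmBlock, List.range_succ_eq_map, List.flatMap_map, List.map_flatMap, add_comm,
    add_left_comm]

theorem occursAt_tmBlock (m : ℤ) (k : ℕ) : OccursAt tmZ m (tmBlock m k) := by
  induction k generalizing m with
  | zero => trivial
  | succ k ih =>
    rw [tmBlock_succ]
    exact ⟨rfl, ih (m + 1)⟩

theorem IsFactor.exists_occursAt {α : List ℕ} (hα : IsFactor α) : ∃ m, OccursAt tmZ m α := by
  obtain ⟨-, m, hm⟩ := hα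
  exact ⟨m, hm ▸ occursAt_tmBlock m α.length⟩

end ThueMorse

theorem factor_blk_decomposition_unique_general {x : ℤ → ℕ} (hx : IsMorseDesubstitutable x)
    {m : ℤ} {α : List ℕ} (hα : OccursAt x m α) {n : ℕ} {is js γ₀ γ₁ γ₀' γ₁' : List ℕ}
    (his : 2 ≤ is.length) (hjs : 2 ≤ js.length)
    (hγ₀ : γ₀.length < 2 ^ n) (hγ₁ : γ₁.length < 2 ^ n)
    (hγ₀' : γ₀'.length < 2 ^ n) (hγ₁' : γ₁'.length < 2 ^ n)
    (h₁ : α = γ₀ ++ (is.map fun i => blk i n).flatten ++ γ₁)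
    (h₂ : α = γ₀' ++ (js.map fun j => blk j n).flatten ++ γ₁') :
    γ₀ = γ₀' ∧ is = js ∧ γ₁ = γ₁' := by
  have hdvd : (2 ^ n : ℤ) ∣ m + γ₀.length := hx.two_pow_dvd_add_length his (h₁ ▸ hα)
  have hdvd' : (2 ^ n : ℤ) ∣ m + γ₀'.length := hx.two_pow_dvd_add_length hjs (h₂ ▸ hα)
  have hlen : γ₀.length = γ₀'.length := by
    have hmod : γ₀.length ≡ γ₀'.length [MOD 2 ^ n] := by
      rw [Nat.modEq_iff_dvd]
      simpa using dvd_sub hdvd' hdvd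
    exact hmod.eq_of_lt_of_lt hγ₀ hγ₀'
  have h := h₁.symm.trans h₂
  rw [List.append_assoc, List.append_assoc] at h
  obtain ⟨hγ₀γ₀', htail⟩ := List.append_inj h hlen
  exact ⟨hγ₀γ₀', flatten_map_append_inj (blk_left_injective n) (length_blk · n) hγ₁ hγ₁' htail⟩

/-- For a fixed `n`, the expression of a factor `α` (`|α| ≥ 2`) of the two-sided Thue–Morse
sequence in the form `γ₀ i₁⁽ⁿ⁾ ⋯ i_k⁽ⁿ⁾ γ₁` (with `2 ≤ k ≤ 4`, `γ₀` a suffix of `0⁽ⁿ⁾` or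
`1⁽ⁿ⁾` of length `< 2ⁿ`, `γ₁` a prefix of `0⁽ⁿ⁾` or `1⁽ⁿ⁾` of length `< 2ⁿ`) is unique. -/
theorem factor_blk_decomposition_unique (α : List ℕ) (hα : IsFactor α) (hlen : 2 ≤ α.length)
    (n : ℕ) (is js : List ℕ) (γ₀ γ₁ γ₀' γ₁' : List ℕ)
    (his : 2 ≤ is.length) (his' : is.length ≤ 4) (his01 : ∀ i ∈ is, i = 0 ∨ i = 1)
    (hjs : 2 ≤ js.length) (hjs' : js.length ≤ 4) (hjs01 : ∀ j ∈ js, j = 0 ∨ j = 1)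
    (hγ₀ : γ₀.length < 2 ^ n) (hγ₀s : γ₀ <:+ blk 0 n ∨ γ₀ <:+ blk 1 n)
    (hγ₁ : γ₁.length < 2 ^ n) (hγ₁p : γ₁ <+: blk 0 n ∨ γ₁ <+: blk 1 n)
    (hγ₀' : γ₀'.length < 2 ^ n) (hγ₀s' : γ₀' <:+ blk 0 n ∨ γ₀' <:+ blk 1 n)
    (hγ₁' : γ₁'.length < 2 ^ n) (hγ₁p' : γ₁' <+: blk 0 n ∨ γ₁' <+: blk 1 n)
    (h1 : α = γ₀ ++ (is.map fun i => blk i n).flatten ++ γ₁)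
    (h2 : α = γ₀' ++ (js.map fun j => blk j n).flatten ++ γ₁') :
    γ₀ = γ₀' ∧ is = js ∧ γ₁ = γ₁' := by
  obtain ⟨m, hm⟩ := hα.exists_occursAt
  exact factor_blk_decomposition_unique_general isMorseDesubstitutable_tmZ hm his hjs
    hγ₀ hγ₁ hγ₀' hγ₁' h1 h2
end

section
/- For every factor α of ω with |α| ≥ 2, the cardinality of the set {(i,j) ∈ {0,1}² : the word i α j is a factor of ω} is 1, 2, or 4. -/
/-! A square `uu` with `|u| = 2` occurs in the Thue–Morse sequence only at even positions, so a
window of length at least four determines the parity of its position. If such a window starts at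
an odd position or ends just before one, it cuts a pair `ω_{2n} ω_{2n+1}` of complementary letters,
and one of its two extending letters is forced. Otherwise it is the image of a window of half the
length under the substitution `0 ↦ 01, 1 ↦ 10`, and the two have equally many extensions. This
descent ends at windows of length two and three. -/

section Letters

theorem tm_le_one (n : ℕ) : tm n ≤ 1 := Nat.le_of_lt_succ (Nat.mod_lt _ two_pos)

theorem tm_eq_one_sub_of_ne {m n : ℕ} (h : tm m ≠ tm n) : tm m = 1 - tm n := by
  have hm := tm_le_one m
  have hn := tm_le_one n
  lia

theorem tm_two_mul_add_one (n : ℕ) : tm (2 * n + 1) = 1 - tm n := by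
  rw [add_comm]
  simp only [tm, Nat.digits_add 2 one_lt_two 1 n one_lt_two (Or.inl one_ne_zero), List.sum_cons]
  lia

theorem tm_succ_of_even {m : ℕ} (hm : Even m) : tm (m + 1) = 1 - tm m := by
  obtain ⟨n, rfl⟩ := hm.exists_two_nsmul
  rw [smul_eq_mul, tm_two_mul_add_one, tm_two_mul]

theorem tm_succ_ne_of_even {m : ℕ} (hm : Even m) : tm (m + 1) ≠ tm m := by
  rw [tm_succ_of_even hm]
  lia

theorem odd_of_tm_succ_eq {m : ℕ} (h : tm (m + 1) = tm m) : Odd m :=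
  Nat.not_even_iff_odd.1 fun hm => tm_succ_ne_of_even hm h

theorem not_tm_cube {m : ℕ} (h₁ : tm (m + 1) = tm m) (h₂ : tm (m + 2) = tm (m + 1)) : False :=
  Nat.not_even_iff_odd.2 (odd_of_tm_succ_eq h₂) (odd_of_tm_succ_eq h₁).add_one

theorem even_of_tm_square {m : ℕ} (h₁ : tm (m + 2) = tm m) (h₂ : tm (m + 3) = tm (m + 1)) :
    Even m := by
  by_contra hm
  obtain ⟨n, rfl⟩ := Nat.not_even_iff_odd.1 hm
  have e₀ : tm (2 * n + 1) = 1 - tm n := tm_two_mul_add_one n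
  have e₁ : tm (2 * n + 1 + 1) = tm (n + 1) := tm_two_mul (n + 1)
  have e₂ : tm (2 * n + 1 + 2) = 1 - tm (n + 1) := tm_two_mul_add_one (n + 1)
  have e₃ : tm (2 * n + 1 + 3) = tm (n + 2) := tm_two_mul (n + 2)
  have hn := tm_le_one n
  have hn' := tm_le_one (n + 1)
  exact not_tm_cube (m := n) (by lia) (by lia)

theorem not_tm_overlap {m : ℕ} (h₀ : tm (m + 2) = tm m) (h₁ : tm (m + 3) = tm (m + 1))
    (h₂ : tm (m + 4) = tm (m + 2)) : False :=
  Nat.even_add_one.1 (even_of_tm_square (m := m + 1) h₁ h₂) (even_of_tm_square h₀ h₁)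

theorem not_tm_xxyxx {m : ℕ} (h₁ : tm (m + 1) = tm m) (h₂ : tm (m + 4) = tm (m + 3)) : False := by
  have hm := odd_of_tm_succ_eq h₁
  have hm' := odd_of_tm_succ_eq h₂
  grind

theorem exists_tm_window_of_middle_ne {i j c d : ℕ} (hi : i ≤ 1) (hj : j ≤ 1) (hc : c ≤ 1)
    (hd : d ≤ 1) (hcd : c ≠ d) :
    ∃ m, tm m = i ∧ tm (m + 1) = c ∧ tm (m + 2) = d ∧ tm (m + 3) = j := by
  -- All eight windows occur in the prefix `0110 1001 1001 011`.
  have hfin : ∀ i j c d : Fin 2, c ≠ d → ∃ m : Fin 12,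
      tm m = i ∧ tm (m + 1) = c ∧ tm (m + 2) = d ∧ tm (m + 3) = j := by decide
  obtain ⟨m, hm⟩ := hfin ⟨i, by lia⟩ ⟨j, by lia⟩ ⟨c, by lia⟩ ⟨d, by lia⟩ (by simpa using hcd)
  exact ⟨m, hm⟩

end Letters

section Occurrences

/-- The positions in the one-sided Thue–Morse sequence at which its length-`k` window starting at
`a` occurs. -/
def occurrences (a k : ℕ) : Set ℕ := {m | ∀ t < k, tm (m + t) = tm (a + t)}

theorem self_mem_occurrences (a k : ℕ) : a ∈ occurrences a k := fun _ _ => rfl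

theorem mem_occurrences_comm {a k m : ℕ} : m ∈ occurrences a k ↔ a ∈ occurrences m k :=
  forall₂_congr fun _ _ => eq_comm

theorem even_of_mem_occurrences {a k m : ℕ} (hk : 4 ≤ k) (hm : m ∈ occurrences a k)
    (ha : Even a) : Even m := by
  -- Opposite parities would make any two consecutive letters complementary, hence a square.
  by_contra hm_odd
  have h₀ : tm m = tm a := hm 0 (by lia)
  have h₁ : tm (m + 1) = tm (a + 1) := hm 1 (by lia)
  have h₂ : tm (m + 2) = tm (a + 2) := hm 2 (by lia)
  have h₃ : tm (m + 3) = tm (a + 3) := hm 3 (by lia)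
  have hcompl₀₁ : tm (m + 1) = 1 - tm m := by rw [h₀, h₁, tm_succ_of_even ha]
  have hcompl₁₂ : tm (m + 2) = 1 - tm (m + 1) :=
    tm_succ_of_even (Nat.not_even_iff_odd.1 hm_odd).add_one
  have hcompl₂₃ : tm (m + 3) = 1 - tm (m + 2) := by
    rw [h₂, h₃, tm_succ_of_even (ha.add even_two)]
  have hm_le := tm_le_one m
  exact hm_odd (even_of_tm_square (by lia) (by lia))

theorem even_iff_even_of_mem_occurrences {a k m : ℕ} (hk : 4 ≤ k) (hm : m ∈ occurrences a k) :
    Even m ↔ Even a :=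
  ⟨even_of_mem_occurrences hk (mem_occurrences_comm.1 hm), even_of_mem_occurrences hk hm⟩

theorem two_mul_mem_occurrences {b l n : ℕ} :
    2 * n ∈ occurrences (2 * b) (2 * l) ↔ n ∈ occurrences b l := by
  refine ⟨fun h t ht => ?_, fun h t ht => ?_⟩
  · simpa only [← mul_add, tm_two_mul] using h (2 * t) (by lia)
  · rcases Nat.even_or_odd' t with ⟨s, rfl | rfl⟩
    · simpa only [← mul_add, tm_two_mul] using h s (by lia)
    · simpa only [← add_assoc, ← mul_add, tm_two_mul_add_one] using
        congrArg (1 - ·) (h s (by lia))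

end Occurrences

section Extensions

/-- The pairs of letters that surround some non-initial occurrence of the length-`k` window of the
one-sided Thue–Morse sequence starting at `a`. -/
def extensions (a k : ℕ) : Set (ℕ × ℕ) :=
  (fun m => (tm m, tm (m + k + 1))) '' {m | m + 1 ∈ occurrences a k}

theorem extensions_subset (a k : ℕ) : extensions a k ⊆ {0, 1} ×ˢ {0, 1} := by
  rintro _ ⟨m, -, rfl⟩
  exact ⟨Nat.le_one_iff_eq_zero_or_eq_one.1 (tm_le_one _),
    Nat.le_one_iff_eq_zero_or_eq_one.1 (tm_le_one _)⟩

theorem finite_extensions (a k : ℕ) : (extensions a k).Finite :=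
  (Set.toFinite _).subset (extensions_subset a k)

theorem ncard_extensions_le_two_of_left {a k c : ℕ}
    (h : ∀ m, m + 1 ∈ occurrences a k → tm m = c) : (extensions a k).ncard ≤ 2 := by
  have hsub : extensions a k ⊆ {c} ×ˢ {0, 1} := by
    rintro _ ⟨m, hm, rfl⟩
    exact ⟨h m hm, (extensions_subset a k ⟨m, hm, rfl⟩).2⟩
  simpa [Set.ncard_prod] using Set.ncard_le_ncard hsub

theorem ncard_extensions_le_two_of_right {a k c : ℕ}
    (h : ∀ m, m + 1 ∈ occurrences a k → tm (m + k + 1) = c) : (extensions a k).ncard ≤ 2 := by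
  have hsub : extensions a k ⊆ {0, 1} ×ˢ {c} := by
    rintro _ ⟨m, hm, rfl⟩
    exact ⟨(extensions_subset a k ⟨m, hm, rfl⟩).1, h m hm⟩
  simpa [Set.ncard_prod] using Set.ncard_le_ncard hsub

theorem ncard_extensions_le_two_of_tm_succ_eq {a k : ℕ} (hk : 2 ≤ k) (ha : tm (a + 1) = tm a) :
    (extensions a k).ncard ≤ 2 := by
  refine ncard_extensions_le_two_of_left (c := 1 - tm a) fun m hm => ?_
  have h₀ : tm (m + 1) = tm a := hm 0 (by lia)
  have h₁ : tm (m + 2) = tm (a + 1) := hm 1 (by lia)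
  have hne : tm m ≠ tm (m + 1) := fun h => not_tm_cube h.symm (by rw [h₁, ha, h₀])
  rw [tm_eq_one_sub_of_ne hne, h₀]

theorem ncard_extensions_two {a : ℕ} (ha : tm (a + 1) ≠ tm a) : (extensions a 2).ncard = 4 := by
  have hsup : {0, 1} ×ˢ {0, 1} ⊆ extensions a 2 := by
    rintro ⟨i, j⟩ ⟨hi, hj⟩
    obtain ⟨m, rfl, h₀, h₁, rfl⟩ := exists_tm_window_of_middle_ne
      (Nat.le_one_iff_eq_zero_or_eq_one.2 hi) (Nat.le_one_iff_eq_zero_or_eq_one.2 hj)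
      (tm_le_one a) (tm_le_one (a + 1)) ha.symm
    refine ⟨m, fun t ht => ?_, rfl⟩
    interval_cases t
    exacts [h₀, h₁]
  rw [(extensions_subset a 2).antisymm hsup]
  simp [Set.ncard_prod]

theorem extensions_three_subset {a : ℕ} (h₁ : tm (a + 1) ≠ tm a) (h₂ : tm (a + 2) ≠ tm (a + 1)) :
    extensions a 3 ⊆ {(0, 1), (1, 0)} := by
  rintro _ ⟨m, hm, rfl⟩
  have e₁ : tm (m + 1) = tm a := hm 0 (by lia)
  have e₂ : tm (m + 2) = tm (a + 1) := hm 1 (by lia)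
  have e₃ : tm (m + 3) = tm (a + 2) := hm 2 (by lia)
  have ha₁ := tm_eq_one_sub_of_ne h₁
  have ha₂ := tm_eq_one_sub_of_ne h₂
  have ha := tm_le_one a
  -- The window is `xyx`, and equal letters would extend it to `xxyxx` or to `yxyxy`.
  have hne : tm m ≠ tm (m + 4) := by
    intro h
    by_cases hx : tm m = tm (m + 1)
    · exact not_tm_xxyxx (m := m) (by lia) (by lia)
    · have hy := tm_eq_one_sub_of_ne hx
      exact not_tm_overlap (m := m) (by lia) (by lia) (by lia)
  have hm₀ := tm_le_one m
  have hm₄ := tm_le_one (m + 4)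
  simp only [Set.mem_insert_iff, Set.mem_singleton_iff, Prod.mk.injEq]
  lia

theorem ncard_extensions_three (a : ℕ) : (extensions a 3).ncard ≤ 2 := by
  by_cases h₁ : tm (a + 1) = tm a
  · exact ncard_extensions_le_two_of_tm_succ_eq (by lia) h₁
  by_cases h₂ : tm (a + 2) = tm (a + 1)
  · refine ncard_extensions_le_two_of_right (c := 1 - tm (a + 2)) fun m hm => ?_
    have e₂ : tm (m + 2) = tm (a + 1) := hm 1 (by lia)
    have e₃ : tm (m + 3) = tm (a + 2) := hm 2 (by lia)
    have hne : tm (m + 4) ≠ tm (m + 3) :=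
      fun h => not_tm_cube (m := m + 2) (by rw [e₃, h₂, e₂]) h
    rw [← e₃]
    exact tm_eq_one_sub_of_ne hne
  exact (Set.ncard_le_ncard (extensions_three_subset h₁ h₂)).trans (Set.ncard_pair (by simp)).le

theorem ncard_extensions_le_two_of_odd {a k : ℕ} (hk : 4 ≤ k) (ha : Odd a) :
    (extensions a k).ncard ≤ 2 := by
  refine ncard_extensions_le_two_of_left (c := 1 - tm a) fun m hm => ?_
  have hm_even : Even m := by
    have hparity := even_iff_even_of_mem_occurrences hk hm
    grind
  have hfirst : tm (m + 1) = tm a := hm 0 (by lia)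
  have hne : tm m ≠ tm (m + 1) := (tm_succ_ne_of_even hm_even).symm
  rw [tm_eq_one_sub_of_ne hne, hfirst]

theorem ncard_extensions_le_two_of_odd_add {a k : ℕ} (hk : 4 ≤ k) (hak : Odd (a + k)) :
    (extensions a k).ncard ≤ 2 := by
  refine ncard_extensions_le_two_of_right (c := 1 - tm (a + (k - 1))) fun m hm => ?_
  have hmk_even : Even (m + k) := by
    have hparity := even_iff_even_of_mem_occurrences hk hm
    grind
  have hlast : tm (m + k) = tm (a + (k - 1)) := by
    rw [← hm (k - 1) (by lia)]
    congr 1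
    lia
  rw [tm_succ_of_even hmk_even, hlast]

theorem extensions_two_mul {b l : ℕ} (hl : 2 ≤ l) :
    extensions (2 * b) (2 * l) = Prod.map (1 - ·) id '' extensions b l := by
  have hocc : {m | m + 1 ∈ occurrences (2 * b) (2 * l)} =
      (2 * · + 1) '' {n | n + 1 ∈ occurrences b l} := by
    ext m
    constructor
    · intro hm
      have hm_even := (even_iff_even_of_mem_occurrences (by lia) hm).2 (even_two_mul b)
      obtain ⟨n, rfl⟩ : Odd m := by grind
      exact ⟨n, two_mul_mem_occurrences.1 hm, rfl⟩
    · rintro ⟨n, hn, rfl⟩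
      exact two_mul_mem_occurrences.2 hn
  have hright (n : ℕ) : tm (2 * n + 1 + 2 * l + 1) = tm (n + l + 1) := by
    rw [← tm_two_mul (n + l + 1)]
    congr 1
    ring
  simp only [extensions, hocc, Set.image_image, tm_two_mul_add_one, hright, Prod.map_apply, id]

theorem ncard_extensions_two_mul {b l : ℕ} (hl : 2 ≤ l) :
    (extensions (2 * b) (2 * l)).ncard = (extensions b l).ncard := by
  rw [extensions_two_mul hl]
  refine Set.InjOn.ncard_image ?_
  rintro ⟨i, j⟩ hp ⟨i', j'⟩ hq h
  have hi : i = 0 ∨ i = 1 := (extensions_subset b l hp).1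
  have hi' : i' = 0 ∨ i' = 1 := (extensions_subset b l hq).1
  have hfst : 1 - i = 1 - i' := congrArg Prod.fst h
  have hsnd : j = j' := congrArg Prod.snd h
  exact Prod.ext (by lia) hsnd

theorem ncard_extensions_le_two_or_eq_four (a : ℕ) {k : ℕ} (hk : 2 ≤ k) :
    (extensions a k).ncard ≤ 2 ∨ (extensions a k).ncard = 4 := by
  induction k using Nat.strong_induction_on generalizing a with
  | _ k ih =>
  obtain rfl | rfl | hk : k = 2 ∨ k = 3 ∨ 4 ≤ k := by lia
  · by_cases ha : tm (a + 1) = tm a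
    · exact Or.inl (ncard_extensions_le_two_of_tm_succ_eq le_rfl ha)
    · exact Or.inr (ncard_extensions_two ha)
  · exact Or.inl (ncard_extensions_three a)
  · rcases Nat.even_or_odd' a with ⟨b, rfl | rfl⟩
    · rcases Nat.even_or_odd' k with ⟨l, rfl | rfl⟩
      · rw [ncard_extensions_two_mul (by lia)]
        exact ih l (by lia) b (by lia)
      · exact Or.inl (ncard_extensions_le_two_of_odd_add hk ⟨b + l, by ring⟩)
    · exact Or.inl (ncard_extensions_le_two_of_odd hk ⟨b, rfl⟩)

end Extensions

section TwoSided

theorem tm_two_mul_add (n : ℕ) {t : ℕ} (ht : t < 2) : tm (2 * n + t) = (tm n + t) % 2 := by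
  have hn := tm_le_one n
  obtain rfl | rfl : t = 0 ∨ t = 1 := by lia
  · rw [add_zero, tm_two_mul]
    lia
  · rw [tm_two_mul_add_one]
    lia

theorem tm_four_mul_add (n : ℕ) {r : ℕ} (hr : r < 4) : tm (4 * n + r) = (tm n + tm r) % 2 := by
  obtain ⟨q, t, hq, ht, rfl⟩ : ∃ q t, q < 2 ∧ t < 2 ∧ r = 2 * q + t :=
    ⟨r / 2, r % 2, by lia, by lia, by lia⟩
  have htm_q : tm q = q := by interval_cases q <;> decide
  rw [show 4 * n + (2 * q + t) = 2 * (2 * n + q) + t by ring, tm_two_mul_add _ ht,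
    tm_two_mul_add n hq, tm_two_mul_add q ht, htm_q]
  lia

theorem tmZ_four_mul_add (n : ℤ) {r : ℕ} (hr : r < 4) :
    tmZ (4 * n + r) = (tmZ n + tm r) % 2 := by
  rcases n with n | n
  · exact_mod_cast tm_four_mul_add n hr
  · have hneg : 4 * Int.negSucc n + r = Int.negSucc (4 * n + (3 - r)) := by lia
    have hpalindrome : tm (3 - r) = tm r := by interval_cases r <;> decide
    rw [hneg, tmZ_negSucc, tmZ_negSucc, tm_four_mul_add n (by lia), hpalindrome]

-- `ω_5 ω_6 = ω_{-1} ω_0`, and this is preserved by the square of the substitution.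
theorem tmZ_six_mul_four_pow_add (N : ℕ) {n : ℤ} (h₁ : -4 ^ N ≤ n) (h₂ : n < 4 ^ N) :
    tmZ (6 * 4 ^ N + n) = tmZ n := by
  induction N generalizing n with
  | zero =>
    obtain rfl | rfl : n = -1 ∨ n = 0 := by lia
    all_goals decide
  | succ N ih =>
    obtain ⟨q, r, hr, rfl⟩ : ∃ (q : ℤ) (r : ℕ), r < 4 ∧ n = 4 * q + r :=
      ⟨n / 4, (n % 4).toNat, by lia, by lia⟩
    rw [show 6 * 4 ^ (N + 1) + (4 * q + r) = 4 * (6 * 4 ^ N + q) + r by ring,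
      tmZ_four_mul_add _ hr, tmZ_four_mul_add _ hr, ih (by lia) (by lia)]

theorem exists_tm_eq_tmZ (m : ℤ) (k : ℕ) : ∃ b : ℕ, ∀ t < k, tm (b + 1 + t) = tmZ (m + t) := by
  obtain ⟨N, hN⟩ := pow_unbounded_of_one_lt (|m| + k) (by simp : (1 : ℤ) < 4)
  have hm := neg_abs_le m
  have hm' := le_abs_self m
  refine ⟨(6 * 4 ^ N + m - 1).toNat, fun t ht => ?_⟩
  rw [← tmZ_six_mul_four_pow_add N (by lia : -4 ^ N ≤ m + t) (by lia), ← tmZ_natCast]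
  congr 1
  lia

end TwoSided

section Factors

/-- The word of length `k` at position `a` of the one-sided Thue–Morse sequence. -/
def tmWord (a k : ℕ) : List ℕ := (List.range k).map fun t => tm (a + t)

theorem length_tmWord (a k : ℕ) : (tmWord a k).length = k := by simp [tmWord]

theorem tmWord_inj {m a k : ℕ} : tmWord m k = tmWord a k ↔ m ∈ occurrences a k := by
  simp only [tmWord, List.map_inj_left, List.mem_range, occurrences, Set.mem_ofPred_eq]

theorem tmWord_add_two (m k : ℕ) :
    tmWord m (k + 2) = tm m :: (tmWord (m + 1) k ++ [tm (m + k + 1)]) := by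
  simp only [tmWord, List.range_succ_eq_map (n := k + 1), List.range_succ (n := k)]
  simp [add_assoc, add_comm, add_left_comm, Function.comp_def]

-- In `tmBlock` it is the list `List.range k` that is cast to `ℤ`, not its individual entries.
theorem tmBlock_eq_map (m : ℤ) (k : ℕ) :
    tmBlock m k = (List.range k).map fun t : ℕ => tmZ (m + t) := by
  simp [tmBlock, List.map_eq_flatMap, List.flatMap_assoc]

theorem isFactor_tmWord (a : ℕ) {k : ℕ} (hk : k ≠ 0) : IsFactor (tmWord a k) := by
  refine ⟨by simpa [tmWord] using hk, a, ?_⟩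
  rw [length_tmWord, tmBlock_eq_map, tmWord]
  exact_mod_cast List.map_congr_left fun t _ => (tmZ_natCast (a + t)).symm

theorem IsFactor.exists_eq_tmWord_succ {α : List ℕ} (hα : IsFactor α) :
    ∃ b, α = tmWord (b + 1) α.length := by
  obtain ⟨-, m, hm⟩ := hα
  obtain ⟨b, hb⟩ := exists_tm_eq_tmZ m α.length
  refine ⟨b, hm.trans ?_⟩
  rw [tmBlock_eq_map, tmWord]
  exact List.map_congr_left fun t ht => (hb t (List.mem_range.1 ht)).symm

theorem isFactor_cons_tmWord_append_iff {a k i j : ℕ} :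
    IsFactor (i :: (tmWord a k ++ [j])) ↔ (i, j) ∈ extensions a k := by
  constructor
  · intro h
    obtain ⟨b, hb⟩ := h.exists_eq_tmWord_succ
    have hlen : (i :: (tmWord a k ++ [j])).length = k + 2 := by simp [length_tmWord]
    rw [hlen, tmWord_add_two, List.cons.injEq] at hb
    obtain ⟨hw, hj⟩ := List.append_inj' hb.2 rfl
    exact ⟨b + 1, tmWord_inj.1 hw.symm, Prod.ext hb.1.symm (List.singleton_inj.1 hj).symm⟩
  · rintro ⟨m, hm, hij⟩
    obtain ⟨rfl, rfl⟩ := Prod.mk.inj hij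
    rw [← tmWord_inj.2 hm, ← tmWord_add_two]
    exact isFactor_tmWord m (by lia)

theorem setOf_isFactor_eq_extensions (a k : ℕ) :
    {p : ℕ × ℕ | (p.1 = 0 ∨ p.1 = 1) ∧ (p.2 = 0 ∨ p.2 = 1) ∧
      IsFactor (p.1 :: (tmWord a k ++ [p.2]))} = extensions a k := by
  ext p
  simp only [Set.mem_ofPred_eq, isFactor_cons_tmWord_append_iff, ← and_assoc]
  exact and_iff_right_of_imp fun hp => extensions_subset a k hp

end Factors

/-- For every factor `α` of the two-sided Thue–Morse sequence with `|α| ≥ 2`, the number of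
pairs `(i,j) ∈ {0,1}²` such that `i α j` is a factor is `1`, `2`, or `4`. -/
theorem extension_number (α : List ℕ) (hα : IsFactor α) (hlen : 2 ≤ α.length) :
    ({p : ℕ × ℕ | (p.1 = 0 ∨ p.1 = 1) ∧ (p.2 = 0 ∨ p.2 = 1) ∧
        IsFactor (p.1 :: (α ++ [p.2]))}.ncard = 1 ∨
     {p : ℕ × ℕ | (p.1 = 0 ∨ p.1 = 1) ∧ (p.2 = 0 ∨ p.2 = 1) ∧
        IsFactor (p.1 :: (α ++ [p.2]))}.ncard = 2 ∨
     {p : ℕ × ℕ | (p.1 = 0 ∨ p.1 = 1) ∧ (p.2 = 0 ∨ p.2 = 1) ∧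
        IsFactor (p.1 :: (α ++ [p.2]))}.ncard = 4) := by
  obtain ⟨b, hb⟩ := hα.exists_eq_tmWord_succ
  generalize α.length = k at hb hlen
  subst hb
  rw [setOf_isFactor_eq_extensions]
  have hpos : 0 < (extensions (b + 1) k).ncard :=
    (Set.ncard_pos (finite_extensions (b + 1) k)).2 ⟨_, b, self_mem_occurrences (b + 1) k, rfl⟩
  have hcard := ncard_extensions_le_two_or_eq_four (b + 1) hlen
  lia
end
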